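/- Suppose A₁, A₂ ∈ A satisfy Hom_R(A₁,A₂) = 0 = Hom_R(A₂,A₁). Then E_{A₁} ⋆ F_{A₂} = F_{A₂} ⋆ E_{A₁} in DH(R). -/

import Mathlib

set_option linter.unusedSectionVars false

open CategoryTheory CategoryTheory.Limits Opposite

noncomputable section

universe u

variable (k : Type) [Field k] [Fintype k]
variable (R : Type u) [SmallCategory R] [Abelian R] [Linear k R] [EnoughProjectives R]

/-- The objects `A` of `R` such that `Hom(M, A)` is a finite set for every `M`. -/
def IsFinHom (A : R) : Prop := ∀ M : R, Finite (M ⟶ A)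

/-- The Euler form `⟨M,A⟩ = dim Hom(M,A) - dim Ext¹(M,A)`. -/
def euler (M A : R) : ℤ :=
  (Module.finrank k (M ⟶ A) : ℤ) -
    (Module.finrank k (((_root_.Ext k R 1).obj (op M)).obj A) : ℤ)

/-- The set of relations defining the Grothendieck group of `R`. -/
def sesSet : Set (FreeAbelianGroup R) :=
  {x | ∃ S : ShortComplex R, S.ShortExact ∧
    x = FreeAbelianGroup.of S.X₂ - FreeAbelianGroup.of S.X₁ - FreeAbelianGroup.of S.X₃}

/-- The Grothendieck group `K(R)`. -/
abbrev K0 := FreeAbelianGroup R ⧸ AddSubgroup.closure (sesSet R)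

/-- The class of an object in `K(R)`. -/
def K0.cls (X : R) : K0 R := QuotientAddGroup.mk (FreeAbelianGroup.of X)

/-- The set of relations defining the Grothendieck group of the subcategory `A`. -/
def sesSetA : Set (FreeAbelianGroup {A : R // IsFinHom R A}) :=
  {x | ∃ (S : ShortComplex R) (h1 : IsFinHom R S.X₁) (h2 : IsFinHom R S.X₂)
      (h3 : IsFinHom R S.X₃), S.ShortExact ∧
    x = FreeAbelianGroup.of ⟨S.X₂, h2⟩ - FreeAbelianGroup.of ⟨S.X₁, h1⟩ -
      FreeAbelianGroup.of ⟨S.X₃, h3⟩}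

/-- The Grothendieck group `K(A)`. -/
abbrev KA := FreeAbelianGroup {A : R // IsFinHom R A} ⧸ AddSubgroup.closure (sesSetA R)

/-- The class of an object of `A` in `K(A)`. -/
def KA.cls (A : {A : R // IsFinHom R A}) : KA R := QuotientAddGroup.mk (FreeAbelianGroup.of A)

/-- `R` is hereditary, i.e. of global dimension at most 1. -/
def Hereditary : Prop :=
  ∀ X Y : R, Subsingleton (((_root_.Ext k R 2).obj (op X)).obj Y)

/-- Condition (c): cancellation for projectives. -/
def CondC : Prop :=
  ∀ P Q M : R, Projective P → Projective Q → Projective M →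
    Nonempty ((M ⊞ P) ≅ (M ⊞ Q)) → Nonempty (P ≅ Q)

/-- Condition (d): every element of `K(R)` is a `ℚ`-linear combination of classes of
objects of `A`. -/
def CondD : Prop :=
  ∀ x : K0 R, ∃ n : ℕ, n ≠ 0 ∧ (n : ℤ) • x ∈
    AddSubgroup.closure (Set.range fun A : {A : R // IsFinHom R A} => K0.cls R A.1)

/-- Condition (e). -/
def CondE : Prop :=
  ∀ A B : R, IsFinHom R A → IsFinHom R B → K0.cls R A = K0.cls R B →
    ∀ P : R, Projective P → Nat.card (P ⟶ A) = Nat.card (P ⟶ B)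

structure Z2Cx where
  X0 : R
  X1 : R
  d0 : X0 ⟶ X1
  d1 : X1 ⟶ X0
  d01 : d0 ≫ d1 = 0
  d10 : d1 ≫ d0 = 0

namespace Z2Cx

variable {R}

/-- Morphisms of `ℤ/2`-graded complexes. -/
@[ext] structure Hom (M N : Z2Cx R) where
  f0 : M.X0 ⟶ N.X0
  f1 : M.X1 ⟶ N.X1
  comm0 : M.d0 ≫ f1 = f0 ≫ N.d0
  comm1 : M.d1 ≫ f0 = f1 ≫ N.d1

instance : CategoryStruct (Z2Cx R) where
  Hom := Hom
  id M := ⟨𝟙 _, 𝟙 _, by simp, by simp⟩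
  comp {M N P} f g := ⟨f.f0 ≫ g.f0, f.f1 ≫ g.f1, by
      rw [← Category.assoc, f.comm0, Category.assoc, g.comm0, Category.assoc], by
      rw [← Category.assoc, f.comm1, Category.assoc, g.comm1, Category.assoc]⟩

@[simp] lemma id_f0 (M : Z2Cx R) : (𝟙 M : Hom M M).f0 = 𝟙 M.X0 := rfl
@[simp] lemma id_f1 (M : Z2Cx R) : (𝟙 M : Hom M M).f1 = 𝟙 M.X1 := rfl
@[simp] lemma comp_f0 {M N P : Z2Cx R} (f : M ⟶ N) (g : N ⟶ P) :
    (f ≫ g).f0 = Hom.f0 f ≫ Hom.f0 g := rfl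
@[simp] lemma comp_f1 {M N P : Z2Cx R} (f : M ⟶ N) (g : N ⟶ P) :
    (f ≫ g).f1 = Hom.f1 f ≫ Hom.f1 g := rfl

instance : Category (Z2Cx R) where
  id_comp f := by apply Hom.ext <;> simp
  comp_id f := by apply Hom.ext <;> simp
  assoc f g h := by apply Hom.ext <;> simp

variable (R)

/-- The two-term complex `C_f` associated to a morphism `f`, concentrated so that
`X1 = P`, `X0 = Q`, `d1 = f`, `d0 = 0`. -/
def Cf {P Q : R} (f : P ⟶ Q) : Z2Cx R := ⟨Q, P, 0, f, by simp, by simp⟩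

/-- The shift involution `†`: it interchanges the gradings and negates the differentials. -/
def dagger (M : Z2Cx R) : Z2Cx R :=
  ⟨M.X1, M.X0, -M.d1, -M.d0, by simp [M.d10], by simp [M.d01]⟩

/-- The acyclic complex `K_P` with `d1 = 𝟙 P` and `d0 = 0`. -/
def KP (P : R) : Z2Cx R := ⟨P, P, 0, 𝟙 P, by simp, by simp⟩

/-- Direct sum of `ℤ/2`-graded complexes. -/
def dsum (M N : Z2Cx R) : Z2Cx R where
  X0 := M.X0 ⊞ N.X0
  X1 := M.X1 ⊞ N.X1
  d0 := biprod.map M.d0 N.d0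
  d1 := biprod.map M.d1 N.d1
  d01 := by ext <;> simp [M.d01, N.d01]
  d10 := by ext <;> simp [M.d10, N.d10]

/-- Degree `0` homology of a `ℤ/2`-graded complex. -/
def H0 (M : Z2Cx R) : R := (ShortComplex.mk M.d1 M.d0 M.d10).homology

/-- Degree `1` homology of a `ℤ/2`-graded complex. -/
def H1 (M : Z2Cx R) : R := (ShortComplex.mk M.d0 M.d1 M.d01).homology

/-- The homology complex `H•(M•)`, with zero differentials. -/
def Hcx (M : Z2Cx R) : Z2Cx R := ⟨H0 R M, H1 R M, 0, 0, by simp, by simp⟩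

/-- A complex is acyclic if its homology vanishes. -/
def Acyclic (M : Z2Cx R) : Prop := IsZero (H0 R M) ∧ IsZero (H1 R M)

end Z2Cx

namespace Z2Cx

variable {R}

/-- A short exact sequence of `ℤ/2`-graded complexes, exhibiting an extension of `M` by `N`
(short exactness of a sequence of complexes is componentwise short exactness). -/
structure ExtSES (M N : Z2Cx R) where
  E : Z2Cx R
  i : N ⟶ E
  p : E ⟶ M
  w0 : Hom.f0 i ≫ Hom.f0 p = 0
  w1 : Hom.f1 i ≫ Hom.f1 p = 0
  ex0 : (ShortComplex.mk (Hom.f0 i) (Hom.f0 p) w0).ShortExact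
  ex1 : (ShortComplex.mk (Hom.f1 i) (Hom.f1 p) w1).ShortExact

/-- Equivalence of extensions of complexes. -/
def ExtEquiv (M N : Z2Cx R) (s t : ExtSES M N) : Prop :=
  ∃ φ : s.E ≅ t.E, s.i ≫ φ.hom = t.i ∧ φ.hom ≫ t.p = s.p

/-- The set `Ext¹_{C(R)}(M•, N•)` of equivalence classes of extensions of `M•` by `N•`
in the category of `ℤ/2`-graded complexes over `R`. -/
def ExtCl (M N : Z2Cx R) := Quot (ExtEquiv M N)

end Z2Cx

/-- Complexes of projectives with homology in the subcategory `A`, i.e. objects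
of `C_fin(P)`. -/
def FinCx (M : Z2Cx R) : Prop :=
  Projective M.X0 ∧ Projective M.X1 ∧ IsFinHom R (Z2Cx.H0 R M) ∧ IsFinHom R (Z2Cx.H1 R M)

attribute [local instance] Classical.propDecidable

/-- The class `[M•] = [M₀] - [M₁]` in `K(R)` of a `ℤ/2`-graded complex. -/
def clsOf (M : Z2Cx R) : K0 R := K0.cls R M.X0 - K0.cls R M.X1

/-- Isomorphism of `ℤ/2`-graded complexes, as a relation. -/
def cxRel (M N : Z2Cx R) : Prop := Nonempty (M ≅ N)

/-- Isomorphism classes of `ℤ/2`-graded complexes. -/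
def CxCls := Quot (cxRel R)

/-- The isomorphism class of a complex. -/
def ccls (M : Z2Cx R) : CxCls R := Quot.mk _ M

/-- The isomorphism class of the middle term of an extension class. -/
def extMid {M N : Z2Cx R} : Z2Cx.ExtCl M N → CxCls R :=
  Quot.lift (fun s => ccls R s.E) (fun s t h => by
    obtain ⟨φ, -, -⟩ := h
    exact Quot.sound ⟨φ⟩)

/-- `|Ext¹_{C(R)}(M•,N•)_{P•}|` : the number of extension classes of `M•` by `N•` whose
middle term has isomorphism class `c`. -/
def extCount (M N : Z2Cx R) (c : CxCls R) : ℕ :=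
  Nat.card {x : Z2Cx.ExtCl M N // extMid R x = c}

/-- The `ℚ`-valued extension of the Euler form to `K(R) × K(R)`
(which exists by condition (d)). -/
structure EulerData where
  eQ : K0 R →+ K0 R →+ ℚ
  compat : ∀ (M A : R), IsFinHom R A →
    eQ (K0.cls R M) (K0.cls R A) = euler k R M A

/-- A choice, for every complex of projectives `M•`, of the classes `[M₁⁺]` and `[M₀⁻]`
of the components of the canonical decomposition `M• = M•⁺ ⊕ M•⁻ = C_f ⊕ C_g^†`. -/
structure DecData where
  cplus : Z2Cx R → K0 R
  cminus : Z2Cx R → K0 R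
  spec : ∀ M : Z2Cx R, Projective M.X0 → Projective M.X1 →
    ∃ (P Q P' Q' : R) (f : P ⟶ Q) (g : P' ⟶ Q'),
      Projective P ∧ Projective Q ∧ Projective P' ∧ Projective Q' ∧
      Mono f ∧ Mono g ∧
      Nonempty (M ≅ Z2Cx.dsum R (Z2Cx.Cf R f) (Z2Cx.dagger R (Z2Cx.Cf R g))) ∧
      cplus M = K0.cls R P ∧ cminus M = K0.cls R P'

variable {k R}

/-- `μ(M•,N•) = Σ_{i,j} ⟨[Mᵢ^{ε(j)}], [N_{j+1}^{ε(i)}]⟩`. -/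
def mu (ed : EulerData k R) (dd : DecData R) (M N : Z2Cx R) : ℚ :=
  ed.eQ (K0.cls R M.X0 - dd.cminus M) (dd.cplus N) +
    ed.eQ (dd.cplus M) (K0.cls R N.X1 - dd.cplus N) +
    ed.eQ (dd.cminus M) (K0.cls R N.X0 - dd.cminus N) +
    ed.eQ (K0.cls R M.X1 - dd.cplus M) (dd.cminus N)

/-- `h(M•,N•) = q^{μ(M•,N•)} ⬝ |Hom_{C(R)}(H•(M•), H•(N•))|`. -/
def hVal (ed : EulerData k R) (dd : DecData R) (M N : Z2Cx R) : ℝ :=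
  (Fintype.card k : ℝ) ^ ((mu ed dd M N : ℚ) : ℝ) *
    (Nat.card (Z2Cx.Hcx R M ⟶ Z2Cx.Hcx R N) : ℝ)

/-- The structure constants of the Hall algebra `H(C_fin(P))`:
the coefficient of the basis element `c` in `[M•] ⋆ [N•]`. -/
def hallCoeff (v : ℝ) (ed : EulerData k R) (dd : DecData R) (M N : Z2Cx R)
    (c : CxCls R) : ℂ :=
  (((v ^ (((ed.eQ (K0.cls R M.X0) (K0.cls R N.X0) +
      ed.eQ (K0.cls R M.X1) (K0.cls R N.X1) : ℚ)) : ℝ) *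
    (extCount R M N c : ℝ) / hVal ed dd M N : ℝ)) : ℂ)

variable (k R)

/-- Objects of `C_fin(P)`. -/
def FCx := {M : Z2Cx R // FinCx R M}

/-- Isomorphism classes of objects of `C_fin(P)`. -/
def FCls := Quot (fun M N : FCx R => Nonempty (M.1 ≅ N.1))

/-- The isomorphism class of an object of `C_fin(P)`. -/
def fcls (M : FCx R) : FCls R := Quot.mk _ M

/-- Comparison of isomorphism classes in `C_fin(P)` with isomorphism classes of
arbitrary complexes. -/
def fc2c : FCls R → CxCls R :=
  Quot.lift (fun M => ccls R M.1) (fun _ _ h => Quot.sound h)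

/-- The symmetrized Euler form `(α,β) = ⟨α,β⟩ + ⟨β,α⟩`. -/
def sForm (ed : EulerData k R) (a b : K0 R) : ℚ := ed.eQ a b + ed.eQ b a

open ZeroObject in
/-- The zero complex. -/
def zeroCx : Z2Cx R := ⟨0, 0, 0, 0, by simp, by simp⟩

/-- All the data constituting the localized Hall algebra `DH(R)`:
the Hall algebra `H(C_fin(P))` (a free `ℂ`-module on the isomorphism classes of
`C_fin(P)`, with the Hall multiplication `mulH` determined by the structure constants
`hallCoeff`), and its localization `D` at the classes of acyclic complexes, together
with the elements `K_α ⋆ K_β^† = KK (α, β)` and the canonical map `loc`.  The axioms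
express that `D` is precisely the localization of `H(C_fin(P))` at the classes of
acyclic complexes, with the `ℂ[K(R) × K(R)]`-bimodule structure of the paper. -/
structure DHSetting where
  v : ℝ
  v_pos : 0 < v
  v_sq : v ^ 2 = (Fintype.card k : ℝ)
  ed : EulerData k R
  dd : DecData R
  /-- the Hall multiplication on `H(C_fin(P))` -/
  mulH : ((FCls R) →₀ ℂ) →ₗ[ℂ] ((FCls R) →₀ ℂ) →ₗ[ℂ] ((FCls R) →₀ ℂ)
  mulH_single : ∀ (M N : FCx R) (c : FCls R),
    (mulH (Finsupp.single (fcls R M) 1) (Finsupp.single (fcls R N) 1)) c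
      = hallCoeff v ed dd M.1 N.1 (fc2c R c)
  /-- the carrier of the localized Hall algebra `DH(R)` -/
  D : Type u
  [grp : AddCommGroup D]
  [mod : Module ℂ D]
  /-- the multiplication `⋆` of `DH(R)` -/
  mulD : D →ₗ[ℂ] D →ₗ[ℂ] D
  one : D
  one_mul : ∀ d, mulD one d = d
  mul_one : ∀ d, mulD d one = d
  /-- the canonical map `H(C_fin(P)) → DH(R)` -/
  loc : ((FCls R) →₀ ℂ) →ₗ[ℂ] D
  loc_one : ∀ h : FinCx R (zeroCx R),
    loc (Finsupp.single (fcls R ⟨zeroCx R, h⟩) 1) = one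
  loc_mul : ∀ x y, mulD (loc x) (loc y) = loc (mulH x y)
  /-- the elements `K_α ⋆ K_β^†` -/
  KK : K0 R × K0 R → D
  KK_zero : KK 0 = one
  KK_mul : ∀ a b, mulD (KK a) (KK b) = KK (a + b)
  KK_P : ∀ (P : R), Projective P → ∀ h : FinCx R (Z2Cx.KP R P),
    loc (Finsupp.single (fcls R ⟨Z2Cx.KP R P, h⟩) 1) = KK (K0.cls R P, 0)
  KK_Pd : ∀ (P : R), Projective P → ∀ h : FinCx R (Z2Cx.dagger R (Z2Cx.KP R P)),
    loc (Finsupp.single (fcls R ⟨Z2Cx.dagger R (Z2Cx.KP R P), h⟩) 1) = KK (0, K0.cls R P)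
  /-- the bimodule rule `(K_α ⋆ K_β^†) ⋆ [M•] = v^{(α-β,[M•])} [M•] ⋆ (K_α ⋆ K_β^†)` -/
  comm_rule : ∀ (a b : K0 R) (M : FCx R),
    mulD (KK (a, b)) (loc (Finsupp.single (fcls R M) 1)) =
      (((v ^ ((sForm k R ed (a - b) (clsOf R M.1) : ℚ) : ℝ) : ℝ) : ℂ)) •
        mulD (loc (Finsupp.single (fcls R M) 1)) (KK (a, b))
  /-- multiplication of elements in standard form is induced by the Hall multiplication -/
  mul_general : ∀ (x : (FCls R) →₀ ℂ) (M : FCx R) (a b a' b' : K0 R),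
    mulD (mulD (loc x) (KK (a, b))) (mulD (loc (Finsupp.single (fcls R M) 1)) (KK (a', b'))) =
      (((v ^ ((sForm k R ed (a - b) (clsOf R M.1) : ℚ) : ℝ) : ℝ) : ℂ)) •
        mulD (loc (mulH x (Finsupp.single (fcls R M) 1))) (KK (a + a', b + b'))
  /-- every element of the localization has the standard form `x ⋆ K_α ⋆ K_β^†` -/
  span : ∀ d : D, ∃ (x : (FCls R) →₀ ℂ) (a b : K0 R), d = mulD (loc x) (KK (a, b))
  /-- the kernel of the localization map is exactly the torsion with respect to the
  classes of acyclic complexes -/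
  loc_ker : ∀ x, loc x = 0 ↔ ∃ (K : Z2Cx R) (h : FinCx R K),
    Z2Cx.Acyclic R K ∧ mulH x (Finsupp.single (fcls R ⟨K, h⟩) 1) = 0

attribute [instance] DHSetting.grp DHSetting.mod

variable {k R}

/-- The element `E_{M•} = v^{⟨[M₁⁺]-[M₀⁻],[M•]⟩} K_{-[M₁⁺]} ⋆ K^†_{-[M₀⁻]} ⋆ [M•]`
of the localized Hall algebra. -/
def Eelt (S : DHSetting k R) (M : Z2Cx R) (h : FinCx R M) : S.D :=
  (((S.v ^ ((S.ed.eQ (S.dd.cplus M - S.dd.cminus M) (clsOf R M) : ℚ) : ℝ) : ℝ) : ℂ)) •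
    S.mulD (S.KK (-(S.dd.cplus M), -(S.dd.cminus M)))
      (S.loc (Finsupp.single (fcls R ⟨M, h⟩) 1))

section Helpers

lemma K0.cls_of_ses (S : ShortComplex R) (hS : S.ShortExact) :
    K0.cls R S.X₂ = K0.cls R S.X₁ + K0.cls R S.X₃ := by
  have h : FreeAbelianGroup.of S.X₂ - FreeAbelianGroup.of S.X₁ - FreeAbelianGroup.of S.X₃ ∈
      AddSubgroup.closure (sesSet R) := AddSubgroup.subset_closure ⟨S, hS, rfl⟩
  have h2 := (QuotientAddGroup.eq_zero_iff _).2 h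
  rw [QuotientAddGroup.mk_sub, QuotientAddGroup.mk_sub, sub_sub, sub_eq_zero] at h2
  exact h2

lemma K0.cls_biprod (X Y : R) : K0.cls R (X ⊞ Y) = K0.cls R X + K0.cls R Y :=
  K0.cls_of_ses (ShortComplex.mk (biprod.inl : X ⟶ X ⊞ Y) biprod.snd (by simp))
    (ShortComplex.Splitting.ofHasBinaryBiproduct X Y).shortExact

lemma K0.cls_zero {Z : R} (hZ : IsZero Z) : K0.cls R Z = 0 := by
  have h := K0.cls_of_ses (ShortComplex.mk (0 : Z ⟶ Z) (𝟙 Z) (by simp))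
    { exact := by
        rw [ShortComplex.exact_iff_isZero_homology]
        exact ShortComplex.isZero_homology_of_isZero_X₂ _ hZ
      mono_f := ⟨fun _ _ _ => hZ.eq_of_tgt _ _⟩
      epi_g := by dsimp; infer_instance }
  simpa using h

lemma K0.cls_iso {X Y : R} (e : X ≅ Y) : K0.cls R X = K0.cls R Y := by
  obtain ⟨Z, hZ⟩ := HasZeroObject.zero (C := R)
  have h := K0.cls_of_ses (ShortComplex.mk e.hom (0 : Y ⟶ Z) (by simp))
    { exact := by
        rw [ShortComplex.exact_iff_epi _ rfl]
        dsimp; infer_instance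
      mono_f := by dsimp; infer_instance
      epi_g := ⟨fun _ _ _ => hZ.eq_of_src _ _⟩ }
  rw [K0.cls_zero hZ, add_zero] at h
  exact h.symm

namespace Z2Cx

/-- components of an isomorphism of complexes -/
def iso0 {M N : Z2Cx R} (e : M ≅ N) : M.X0 ≅ N.X0 where
  hom := Hom.f0 e.hom
  inv := Hom.f0 e.inv
  hom_inv_id := by rw [← comp_f0, e.hom_inv_id]; rfl
  inv_hom_id := by rw [← comp_f0, e.inv_hom_id]; rfl

def iso1 {M N : Z2Cx R} (e : M ≅ N) : M.X1 ≅ N.X1 where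
  hom := Hom.f1 e.hom
  inv := Hom.f1 e.inv
  hom_inv_id := by rw [← comp_f1, e.hom_inv_id]; rfl
  inv_hom_id := by rw [← comp_f1, e.inv_hom_id]; rfl

lemma isoOfComp {M N : Z2Cx R} (φ : M ⟶ N) (h0 : IsIso (Hom.f0 φ)) (h1 : IsIso (Hom.f1 φ)) :
    ∃ e : M ≅ N, e.hom = φ := by
  refine ⟨⟨φ, ⟨inv (Hom.f0 φ), inv (Hom.f1 φ), ?_, ?_⟩, ?_, ?_⟩, rfl⟩
  · rw [IsIso.comp_inv_eq, Category.assoc, Hom.comm0]; simp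
  · rw [IsIso.comp_inv_eq, Category.assoc, Hom.comm1]; simp
  · apply Hom.ext
    · exact IsIso.hom_inv_id (Hom.f0 φ)
    · exact IsIso.hom_inv_id (Hom.f1 φ)
  · apply Hom.ext
    · exact IsIso.inv_hom_id (Hom.f0 φ)
    · exact IsIso.inv_hom_id (Hom.f1 φ)

/-- the trivial extension -/
def triv (M N : Z2Cx R) : ExtSES M N where
  E := dsum R N M
  i := ⟨biprod.inl, biprod.inl, by simp [dsum], by simp [dsum]⟩
  p := ⟨biprod.snd, biprod.snd, by simp [dsum], by simp [dsum]⟩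
  w0 := biprod.inl_snd
  w1 := biprod.inl_snd
  ex0 := (ShortComplex.Splitting.ofHasBinaryBiproduct N.X0 M.X0).shortExact
  ex1 := (ShortComplex.Splitting.ofHasBinaryBiproduct N.X1 M.X1).shortExact

lemma isIso_desc {S : ShortComplex R} (hS : S.ShortExact) (σ : S.X₃ ⟶ S.X₂)
    (hσ : σ ≫ S.g = 𝟙 _) : IsIso (biprod.desc S.f σ) := by
  let T : ShortComplex R := ShortComplex.mk (biprod.inl : S.X₁ ⟶ S.X₁ ⊞ S.X₃) biprod.snd (by simp)
  have hT : T.ShortExact := (ShortComplex.Splitting.ofHasBinaryBiproduct S.X₁ S.X₃).shortExact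
  let φ : T ⟶ S := ⟨𝟙 _, biprod.desc S.f σ, 𝟙 _, by simp [T], by
    dsimp [T]; ext <;> simp [hσ]⟩
  have : IsIso φ.τ₁ := by dsimp [φ]; infer_instance
  have : IsIso φ.τ₃ := by dsimp [φ]; infer_instance
  exact ShortComplex.isIso₂_of_shortExact_of_isIso₁₃ φ hT hS

lemma equiv_triv {M N : Z2Cx R} (s : ExtSES M N) (σ : M ⟶ s.E)
    (h0 : Hom.f0 σ ≫ Hom.f0 s.p = 𝟙 _) (h1 : Hom.f1 σ ≫ Hom.f1 s.p = 𝟙 _) :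
    ExtEquiv M N (triv M N) s := by
  let φ : (triv M N).E ⟶ s.E := ⟨biprod.desc (Hom.f0 s.i) (Hom.f0 σ),
    biprod.desc (Hom.f1 s.i) (Hom.f1 σ), by
      dsimp [triv, dsum]; ext <;> simp [Hom.comm0], by
      dsimp [triv, dsum]; ext <;> simp [Hom.comm1]⟩
  obtain ⟨e, he⟩ := isoOfComp φ (isIso_desc s.ex0 _ h0) (isIso_desc s.ex1 _ h1)
  refine ⟨e, ?_, ?_⟩
  · rw [he]
    apply Hom.ext
    · exact biprod.inl_desc _ _
    · exact biprod.inl_desc _ _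
  · rw [he]
    apply Hom.ext
    · rw [comp_f0]; dsimp [φ, triv, dsum]; ext <;> simp [h0, s.w0]
    · rw [comp_f1]; dsimp [φ, triv, dsum]; ext <;> simp [h1, s.w1]

lemma dsum_comm (M N : Z2Cx R) : Nonempty (dsum R M N ≅ dsum R N M) := by
  let φ : dsum R M N ⟶ dsum R N M := ⟨(biprod.braiding _ _).hom, (biprod.braiding _ _).hom, by
      dsimp [dsum]; ext <;> simp, by
      dsimp [dsum]; ext <;> simp⟩
  obtain ⟨e, -⟩ := isoOfComp φ (biprod.braiding _ _).isIso_hom (biprod.braiding _ _).isIso_hom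
  exact ⟨e⟩

lemma isZero_H1_Cf {P Q : R} (f : P ⟶ Q) [Mono f] : IsZero (H1 R (Cf R f)) := by
  unfold H1
  rw [← ShortComplex.exact_iff_isZero_homology, ShortComplex.exact_iff_mono _ rfl]
  dsimp [Cf]; infer_instance

lemma isZero_H0_dCf {P Q : R} (f : P ⟶ Q) [Mono f] : IsZero (H0 R (dagger R (Cf R f))) := by
  unfold H0
  rw [← ShortComplex.exact_iff_isZero_homology, ShortComplex.exact_iff_mono _ neg_zero]
  dsimp [Cf, dagger]; infer_instance

lemma card_hom_aux {M N : Z2Cx R} (h0 : IsZero (H0 R N)) (h1 : IsZero (H1 R M)) :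
    Nat.card (Hcx R M ⟶ Hcx R N) = 1 := by
  rw [Nat.card_eq_one_iff_unique]
  refine ⟨⟨fun a b => ?_⟩, ⟨⟨0, 0, by simp, by simp⟩⟩⟩
  apply Hom.ext
  · exact h0.eq_of_tgt _ _
  · exact h1.eq_of_src _ _

lemma card_hom_aux' {M N : Z2Cx R} (h0 : IsZero (H0 R M)) (h1 : IsZero (H1 R N)) :
    Nat.card (Hcx R M ⟶ Hcx R N) = 1 := by
  rw [Nat.card_eq_one_iff_unique]
  refine ⟨⟨fun a b => ?_⟩, ⟨⟨0, 0, by simp, by simp⟩⟩⟩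
  apply Hom.ext
  · exact h0.eq_of_src _ _
  · exact h1.eq_of_tgt _ _

end Z2Cx

lemma isZero_of_mono_zero {X Y : R} (f : X ⟶ Y) [Mono f] (h : f = 0) : IsZero X := by
  rw [IsZero.iff_id_eq_zero, ← cancel_mono f]; simp [h]

lemma dec_Cf (dd : DecData R) {P Q : R} (f : P ⟶ Q) [Mono f] (hP : Projective P)
    (hQ : Projective Q) :
    dd.cplus (Z2Cx.Cf R f) = K0.cls R P ∧ dd.cminus (Z2Cx.Cf R f) = 0 := by
  obtain ⟨P', Q', P'', Q'', f', g', -, -, -, -, hf', hg', ⟨e⟩, hp, hm⟩ :=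
    dd.spec (Z2Cx.Cf R f) hQ hP
  obtain ⟨e0, e1, c0, c1⟩ : ∃ (e0 : Q ≅ Q' ⊞ P'') (e1 : P ≅ P' ⊞ Q''),
      (0 : Q ⟶ P) ≫ e1.hom = e0.hom ≫ biprod.map 0 (-g') ∧
      f ≫ e0.hom = e1.hom ≫ biprod.map f' (-0) :=
    ⟨Z2Cx.iso0 e, Z2Cx.iso1 e, Z2Cx.Hom.comm0 e.hom, Z2Cx.Hom.comm1 e.hom⟩
  have hd0 : (biprod.map (0 : Q' ⟶ P') (-g') : Q' ⊞ P'' ⟶ P' ⊞ Q'') = 0 := by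
    rw [← cancel_epi e0.hom, comp_zero]
    exact c0.symm.trans zero_comp
  have hg0 : g' = 0 := by
    have := congrArg (fun t => biprod.inr ≫ t ≫ biprod.snd) hd0
    simpa using this
  have zP'' : IsZero P'' := isZero_of_mono_zero g' hg0
  have hmono : Mono (biprod.map f' (-0 : Q'' ⟶ P'')) := by
    have : Mono (e1.hom ≫ (biprod.map f' (-0 : Q'' ⟶ P''))) := by
      have h2 : e1.hom ≫ (biprod.map f' (-0 : Q'' ⟶ P'')) = f ≫ e0.hom :=
        c1.symm
      rw [h2]; exact mono_comp f _
    have h3 := mono_comp (inv e1.hom) (e1.hom ≫ (biprod.map f' (-0 : Q'' ⟶ P'')))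
    rwa [IsIso.inv_hom_id_assoc] at h3
  have zQ'' : IsZero Q'' := by
    apply isZero_of_mono_zero (biprod.inr : Q'' ⟶ P' ⊞ Q'')
    rw [← cancel_mono (biprod.map f' (-0 : Q'' ⟶ P''))]
    simp
  refine ⟨?_, by rw [hm, K0.cls_zero zP'']⟩
  have h4 : K0.cls R P = K0.cls R (P' ⊞ Q'') := K0.cls_iso e1
  rw [hp, h4, K0.cls_biprod, K0.cls_zero zQ'', add_zero]

lemma dec_dCf (dd : DecData R) {P Q : R} (f : P ⟶ Q) [Mono f] (hP : Projective P)
    (hQ : Projective Q) :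
    dd.cplus (Z2Cx.dagger R (Z2Cx.Cf R f)) = 0 ∧
      dd.cminus (Z2Cx.dagger R (Z2Cx.Cf R f)) = K0.cls R P := by
  obtain ⟨P', Q', P'', Q'', f', g', -, -, -, -, hf', hg', ⟨e⟩, hp, hm⟩ :=
    dd.spec (Z2Cx.dagger R (Z2Cx.Cf R f)) hP hQ
  obtain ⟨e0, e1, c0, c1⟩ : ∃ (e0 : P ≅ Q' ⊞ P'') (e1 : Q ≅ P' ⊞ Q''),
      (-f) ≫ e1.hom = e0.hom ≫ biprod.map 0 (-g') ∧
      (-0 : Q ⟶ P) ≫ e0.hom = e1.hom ≫ biprod.map f' (-0) :=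
    ⟨Z2Cx.iso0 e, Z2Cx.iso1 e, Z2Cx.Hom.comm0 e.hom, Z2Cx.Hom.comm1 e.hom⟩
  have hd1 : (biprod.map f' (-0 : Q'' ⟶ P'') : P' ⊞ Q'' ⟶ Q' ⊞ P'') = 0 := by
    rw [← cancel_epi e1.hom, comp_zero]
    refine c1.symm.trans ?_
    simp
  have hf0 : f' = 0 := by
    have := congrArg (fun t => biprod.inl ≫ t ≫ biprod.fst) hd1
    simpa using this
  have zP' : IsZero P' := isZero_of_mono_zero f' hf0
  have hmono : Mono (biprod.map (0 : Q' ⟶ P') (-g')) := by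
    have : Mono (e0.hom ≫ (biprod.map (0 : Q' ⟶ P') (-g'))) := by
      have h2 : e0.hom ≫ (biprod.map (0 : Q' ⟶ P') (-g')) =
          (-f) ≫ e1.hom := c0.symm
      rw [h2]; exact mono_comp (-f) _
    have h3 := mono_comp (inv e0.hom)
      (e0.hom ≫ (biprod.map (0 : Q' ⟶ P') (-g')))
    rwa [IsIso.inv_hom_id_assoc] at h3
  have zQ' : IsZero Q' := by
    apply isZero_of_mono_zero (biprod.inl : Q' ⟶ Q' ⊞ P'')
    rw [← cancel_mono (biprod.map (0 : Q' ⟶ P') (-g'))]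
    simp
  refine ⟨by rw [hp, K0.cls_zero zP'], ?_⟩
  have h4 : K0.cls R P = K0.cls R (Q' ⊞ P'') := K0.cls_iso e0
  rw [hm, h4, K0.cls_biprod, K0.cls_zero zQ', zero_add]

/-- a chain map between resolutions inducing zero is null-homotopic -/
lemma null_homotopy {P₁ Q₁ A₁ P₂ Q₂ A₂ : R} {f : P₁ ⟶ Q₁} {π₁ : Q₁ ⟶ A₁} {g : P₂ ⟶ Q₂}
    {π₂ : Q₂ ⟶ A₂} (w₁ : f ≫ π₁ = 0) (w₂ : g ≫ π₂ = 0)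
    (h₁ : (ShortComplex.mk f π₁ w₁).ShortExact) (h₂ : (ShortComplex.mk g π₂ w₂).ShortExact)
    (h : ∀ t : A₁ ⟶ A₂, t = 0) (a : P₁ ⟶ P₂) (b : Q₁ ⟶ Q₂) (hab : f ≫ b = a ≫ g) :
    ∃ s : Q₁ ⟶ P₂, b = s ≫ g ∧ a = f ≫ s := by
  have := h₁.epi_g
  have hg : Mono g := h₂.mono_f
  have hb : b ≫ π₂ = 0 := by
    have e := h₁.exact.g_desc (b ≫ π₂) (by
      dsimp; rw [← Category.assoc, hab, Category.assoc, w₂, comp_zero])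
    rw [h (h₁.exact.desc _ _), comp_zero] at e
    exact e.symm
  have := h₂.mono_f
  have hs : h₂.exact.lift b hb ≫ g = b := h₂.exact.lift_f b hb
  refine ⟨h₂.exact.lift b hb, hs.symm, ?_⟩
  rw [← cancel_mono g, Category.assoc]
  exact hab.symm.trans (congrArg (f ≫ ·) hs.symm)

/-- lifting through the kernel of a short exact sequence -/
lemma exists_lift {S : ShortComplex R} (hS : S.ShortExact) {X : R} (t : X ⟶ S.X₂)
    (ht : t ≫ S.g = 0) : ∃ a : X ⟶ S.X₁, a ≫ S.f = t := by
  have := hS.mono_f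
  exact ⟨hS.exact.lift t ht, hS.exact.lift_f t ht⟩

lemma ext_triv₁ {P₁ Q₁ A₁ P₂ Q₂ A₂ : R} {f : P₁ ⟶ Q₁} {π₁ : Q₁ ⟶ A₁} {g : P₂ ⟶ Q₂}
    {π₂ : Q₂ ⟶ A₂} (w₁ : f ≫ π₁ = 0) (w₂ : g ≫ π₂ = 0)
    (h₁ : (ShortComplex.mk f π₁ w₁).ShortExact) (h₂ : (ShortComplex.mk g π₂ w₂).ShortExact)
    (h : ∀ t : A₁ ⟶ A₂, t = 0) (hP : Projective P₁) (hQ : Projective Q₁)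
    (s : Z2Cx.ExtSES (Z2Cx.Cf R f) (Z2Cx.dagger R (Z2Cx.Cf R g))) :
    Z2Cx.ExtEquiv _ _ (Z2Cx.triv _ _) s := by
  obtain ⟨⟨E0, E1, d0, d1, d01, d10⟩, ⟨i0, i1, ci0, ci1⟩, ⟨p0, p1, cp0, cp1⟩, w0, w1, ex0, ex1⟩ := s
  dsimp [Z2Cx.Cf, Z2Cx.dagger] at i0 i1 p0 p1 ci0 ci1 cp0 cp1 w0 w1 ex0 ex1
  have := ex0.epi_g
  have := ex1.epi_g
  have m1 : Mono i1 := ex1.mono_f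
  have m0 : Mono i0 := ex0.mono_f
  dsimp at *
  obtain ⟨σ0, hσ0⟩ : ∃ σ0 : Q₁ ⟶ E0, σ0 ≫ p0 = 𝟙 _ := ⟨_, Projective.factorThru_comp (𝟙 _) p0⟩
  obtain ⟨σ1, hσ1⟩ : ∃ σ1 : P₁ ⟶ E1, σ1 ≫ p1 = 𝟙 _ := ⟨_, Projective.factorThru_comp (𝟙 _) p1⟩
  obtain ⟨a, ha⟩ : ∃ a : P₁ ⟶ P₂, a ≫ i0 = σ1 ≫ d1 - f ≫ σ0 := exists_lift ex0 _ (by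
    dsimp; rw [Preadditive.sub_comp, Category.assoc, Category.assoc, hσ0, cp1, ← Category.assoc, hσ1]
    simp)
  obtain ⟨b, hb⟩ : ∃ b : Q₁ ⟶ Q₂, b ≫ i1 = σ0 ≫ d0 := exists_lift ex1 _ (by
    dsimp; rw [Category.assoc, cp0]; simp)
  have hab : f ≫ b = a ≫ g := by
    rw [← cancel_mono i1]
    have e1 : (a ≫ i0) ≫ d0 = - (f ≫ b) ≫ i1 := by
      rw [ha, Preadditive.sub_comp, Category.assoc, d10, Category.assoc, Category.assoc, hb]; simp
    rw [Category.assoc, ← ci0] at e1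
    simp at e1
    simpa using e1.symm
  obtain ⟨s, hs1, hs2⟩ := null_homotopy w₁ w₂ h₁ h₂ h a b hab
  have q0 : (0 : Q₁ ⟶ P₁) ≫ σ1 = (σ0 + s ≫ i0) ≫ d0 := by
    rw [zero_comp, Preadditive.add_comp, ← hb, Category.assoc, ← ci0, hs1]; simp
  have q1 : f ≫ (σ0 + s ≫ i0) = σ1 ≫ d1 := by
    rw [Preadditive.comp_add, ← Category.assoc f s, ← hs2, ha]; abel
  have q2 : (σ0 + s ≫ i0) ≫ p0 = 𝟙 _ := by
    rw [Preadditive.add_comp, Category.assoc, show i0 ≫ p0 = 0 from w0, hσ0]; simp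
  exact Z2Cx.equiv_triv _ ⟨σ0 + s ≫ i0, σ1, q0, q1⟩ q2 hσ1

lemma ext_triv₂ {P₁ Q₁ A₁ P₂ Q₂ A₂ : R} {f : P₁ ⟶ Q₁} {π₁ : Q₁ ⟶ A₁} {g : P₂ ⟶ Q₂}
    {π₂ : Q₂ ⟶ A₂} (w₁ : f ≫ π₁ = 0) (w₂ : g ≫ π₂ = 0)
    (h₁ : (ShortComplex.mk f π₁ w₁).ShortExact) (h₂ : (ShortComplex.mk g π₂ w₂).ShortExact)
    (h : ∀ t : A₂ ⟶ A₁, t = 0) (hP : Projective P₂) (hQ : Projective Q₂)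
    (s : Z2Cx.ExtSES (Z2Cx.dagger R (Z2Cx.Cf R g)) (Z2Cx.Cf R f)) :
    Z2Cx.ExtEquiv _ _ (Z2Cx.triv _ _) s := by
  obtain ⟨⟨E0, E1, d0, d1, d01, d10⟩, ⟨i0, i1, ci0, ci1⟩, ⟨p0, p1, cp0, cp1⟩, w0, w1, ex0, ex1⟩ := s
  dsimp [Z2Cx.Cf, Z2Cx.dagger] at i0 i1 p0 p1 ci0 ci1 cp0 cp1 w0 w1 ex0 ex1
  have := ex0.epi_g
  have := ex1.epi_g
  have m1 : Mono i1 := ex1.mono_f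
  have m0 : Mono i0 := ex0.mono_f
  dsimp at *
  obtain ⟨σ0, hσ0⟩ : ∃ σ0 : P₂ ⟶ E0, σ0 ≫ p0 = 𝟙 _ := ⟨_, Projective.factorThru_comp (𝟙 _) p0⟩
  obtain ⟨σ1, hσ1⟩ : ∃ σ1 : Q₂ ⟶ E1, σ1 ≫ p1 = 𝟙 _ := ⟨_, Projective.factorThru_comp (𝟙 _) p1⟩
  obtain ⟨a, ha⟩ : ∃ a : Q₂ ⟶ Q₁, a ≫ i0 = σ1 ≫ d1 := exists_lift ex0 _ (by
    dsimp; rw [Category.assoc, cp1]; simp)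
  obtain ⟨b, hb⟩ : ∃ b : P₂ ⟶ P₁, b ≫ i1 = σ0 ≫ d0 + g ≫ σ1 := exists_lift ex1 _ (by
    dsimp; rw [Preadditive.add_comp, Category.assoc, cp0, Category.assoc, hσ1, ← Category.assoc,
      hσ0]; simp)
  have hab : g ≫ a = b ≫ f := by
    rw [← cancel_mono i0]
    have e1 : (b ≫ i1) ≫ d1 = (g ≫ a) ≫ i0 := by
      rw [hb, Preadditive.add_comp, Category.assoc, d01, Category.assoc, Category.assoc, ha]; simp
    rw [Category.assoc, ← ci1] at e1
    simpa using e1.symm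
  obtain ⟨s, hs1, hs2⟩ := null_homotopy w₂ w₁ h₂ h₁ h b a hab
  have q0 : (-g) ≫ (σ1 - s ≫ i1) = σ0 ≫ d0 := by
    have e2 : σ0 ≫ d0 = b ≫ i1 - g ≫ σ1 := by rw [hb]; abel
    rw [e2, hs2]; simp; abel
  have q1 : (-0 : Q₂ ⟶ P₂) ≫ σ0 = (σ1 - s ≫ i1) ≫ d1 := by
    rw [Preadditive.sub_comp, ← ha, Category.assoc, ← ci1, hs1]; simp
  have q2 : (σ1 - s ≫ i1) ≫ p1 = 𝟙 _ := by
    rw [Preadditive.sub_comp, Category.assoc, show i1 ≫ p1 = 0 from w1, hσ1]; simp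
  exact Z2Cx.equiv_triv _ ⟨σ0, σ1 - s ≫ i1, q0, q1⟩ hσ0 q2

lemma extCount_of_triv {M N : Z2Cx R}
    (h : ∀ s : Z2Cx.ExtSES M N, Z2Cx.ExtEquiv _ _ (Z2Cx.triv _ _) s) (c : CxCls R) :
    extCount R M N c = if ccls R (Z2Cx.dsum R N M) = c then 1 else 0 := by
  have hu : ∀ x : Z2Cx.ExtCl M N, x = Quot.mk _ (Z2Cx.triv M N) := by
    rintro ⟨s⟩
    exact (Quot.sound (h s)).symm
  unfold extCount
  split_ifs with hc
  · rw [Nat.card_eq_one_iff_unique]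
    exact ⟨⟨fun a b => Subtype.ext ((hu _).trans (hu _).symm)⟩,
      ⟨⟨Quot.mk _ (Z2Cx.triv M N), hc⟩⟩⟩
  · have : IsEmpty {x : Z2Cx.ExtCl M N // extMid R x = c} := by
      refine ⟨fun x => hc ?_⟩
      have h1 := x.2
      rw [hu x.1] at h1
      exact h1
    exact Nat.card_of_isEmpty

lemma ccls_comm (M N : Z2Cx R) : ccls R (Z2Cx.dsum R M N) = ccls R (Z2Cx.dsum R N M) :=
  Quot.sound (Z2Cx.dsum_comm M N)

end Helpers

theorem stmt16 (hH : Hereditary k R) (hc : CondC R) (hd : CondD R) (he : CondE R)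
    (S : DHSetting k R)
    -- a fixed choice of projective resolution `0 → P_C → Q_C → C → 0` for each object
    (rP rQ : R → R) (rf : ∀ C : R, rP C ⟶ rQ C) (rπ : ∀ C : R, rQ C ⟶ C)
    (hres : ∀ C : R, IsFinHom R C → Projective (rP C) ∧ Projective (rQ C) ∧
      ∃ w : rf C ≫ rπ C = 0, (ShortComplex.mk (rf C) (rπ C) w).ShortExact)
    (hfc : ∀ C : R, IsFinHom R C → FinCx R (Z2Cx.Cf R (rf C)))
    (hfcd : ∀ C : R, IsFinHom R C → FinCx R (Z2Cx.dagger R (Z2Cx.Cf R (rf C))))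
    (A₁ A₂ : R) (hA₁ : IsFinHom R A₁) (hA₂ : IsFinHom R A₂)
    (h12 : ∀ f : A₁ ⟶ A₂, f = 0) (h21 : ∀ f : A₂ ⟶ A₁, f = 0) :
    S.mulD (Eelt S (Z2Cx.Cf R (rf A₁)) (hfc A₁ hA₁))
        (Eelt S (Z2Cx.dagger R (Z2Cx.Cf R (rf A₂))) (hfcd A₂ hA₂)) =
      S.mulD (Eelt S (Z2Cx.dagger R (Z2Cx.Cf R (rf A₂))) (hfcd A₂ hA₂))
        (Eelt S (Z2Cx.Cf R (rf A₁)) (hfc A₁ hA₁)) := by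

  obtain ⟨pP1, pQ1, w1, ex1⟩ := hres A₁ hA₁
  obtain ⟨pP2, pQ2, w2, ex2⟩ := hres A₂ hA₂
  have m1 : Mono (rf A₁) := ex1.mono_f
  have m2 : Mono (rf A₂) := ex2.mono_f
  obtain ⟨cp1, cm1⟩ := dec_Cf S.dd (rf A₁) pP1 pQ1
  obtain ⟨cp2, cm2⟩ := dec_dCf S.dd (rf A₂) pP2 pQ2
  have cnt : ∀ c, extCount R (Z2Cx.Cf R (rf A₁)) (Z2Cx.dagger R (Z2Cx.Cf R (rf A₂))) c =
      extCount R (Z2Cx.dagger R (Z2Cx.Cf R (rf A₂))) (Z2Cx.Cf R (rf A₁)) c := by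
    intro c
    rw [extCount_of_triv (ext_triv₁ w1 w2 ex1 ex2 h12 pP1 pQ1),
      extCount_of_triv (ext_triv₂ w1 w2 ex1 ex2 h21 pP2 pQ2), ccls_comm]
  have ch1 := Z2Cx.card_hom_aux (Z2Cx.isZero_H0_dCf (rf A₂)) (Z2Cx.isZero_H1_Cf (rf A₁))
  have ch2 := Z2Cx.card_hom_aux' (Z2Cx.isZero_H0_dCf (rf A₂)) (Z2Cx.isZero_H1_Cf (rf A₁))
  have hv := S.v_pos
  have hq : ∀ t : ℝ, (Fintype.card k : ℝ) ^ t = S.v ^ (2 * t) := by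
    intro t
    rw [← S.v_sq, Real.rpow_mul hv.le, Real.rpow_two]
  have x10 : (Z2Cx.Cf R (rf A₁)).X0 = rQ A₁ := rfl
  have x11 : (Z2Cx.Cf R (rf A₁)).X1 = rP A₁ := rfl
  have x20 : (Z2Cx.dagger R (Z2Cx.Cf R (rf A₂))).X0 = rP A₂ := rfl
  have x21 : (Z2Cx.dagger R (Z2Cx.Cf R (rf A₂))).X1 = rQ A₂ := rfl
  generalize hM : hfc A₁ hA₁ = fM
  generalize hN : hfcd A₂ hA₂ = fN
  clear hM hN hfc hfcd
  generalize Z2Cx.dagger R (Z2Cx.Cf R (rf A₂)) = N at *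
  generalize Z2Cx.Cf R (rf A₁) = M at *
  set P1 := K0.cls R (rP A₁)
  set Q1 := K0.cls R (rQ A₁)
  set P2 := K0.cls R (rP A₂)
  set Q2 := K0.cls R (rQ A₂)
  have mu1 : mu S.ed S.dd M N = S.ed.eQ P1 Q2 := by
    simp [mu, cp1, cm1, cp2, cm2, x10, x11, x20, x21, P1, P2, Q2]
  have mu2 : mu S.ed S.dd N M = S.ed.eQ P2 Q1 := by
    simp [mu, cp1, cm1, cp2, cm2, x10, x11, x20, x21, P1, P2, Q1]
  obtain ⟨FM, hFM, hEM⟩ : ∃ F : FCx R, F.1 = M ∧ Eelt S M fM =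
      (((S.v ^ ((S.ed.eQ (S.dd.cplus M - S.dd.cminus M) (clsOf R M) : ℚ) : ℝ) : ℝ) : ℂ)) •
        S.mulD (S.KK (-(S.dd.cplus M), -(S.dd.cminus M)))
          (S.loc (Finsupp.single (fcls R F) 1)) := ⟨⟨M, fM⟩, rfl, rfl⟩
  obtain ⟨FN, hFN, hEN⟩ : ∃ F : FCx R, F.1 = N ∧ Eelt S N fN =
      (((S.v ^ ((S.ed.eQ (S.dd.cplus N - S.dd.cminus N) (clsOf R N) : ℚ) : ℝ) : ℝ) : ℂ)) •
        S.mulD (S.KK (-(S.dd.cplus N), -(S.dd.cminus N)))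
          (S.loc (Finsupp.single (fcls R F) 1)) := ⟨⟨N, fN⟩, rfl, rfl⟩
  have key : S.mulH (Finsupp.single (fcls R FM) 1) (Finsupp.single (fcls R FN) 1) =
      (((S.v ^ (((S.ed.eQ Q1 P2 - S.ed.eQ P1 Q2 - S.ed.eQ Q2 P1 + S.ed.eQ P2 Q1 : ℚ)) : ℝ) : ℝ)) : ℂ) •
      S.mulH (Finsupp.single (fcls R FN) 1) (Finsupp.single (fcls R FM) 1) := by
    ext c
    rw [Finsupp.smul_apply, S.mulH_single, S.mulH_single, smul_eq_mul, hFM, hFN, hallCoeff, hallCoeff,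
      ← Complex.ofReal_mul, cnt, hVal, hVal, ch1, ch2, hq, hq, mu1, mu2, x10, x11, x20, x21]
    congr 1
    rw [Nat.cast_one, mul_one, mul_one, mul_div_right_comm, mul_div_right_comm, ← Real.rpow_sub hv,
      ← Real.rpow_sub hv, ← mul_assoc, ← Real.rpow_add hv]
    congr 2
    push_cast
    ring
  have cM : clsOf R M = Q1 - P1 := by rw [clsOf, x10, x11]
  have cN : clsOf R N = P2 - Q2 := by rw [clsOf, x20, x21]
  rw [hEM, hEN, S.comm_rule, S.comm_rule, hFM, hFN]
  simp only [map_smul, LinearMap.smul_apply]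
  rw [S.mul_general, S.mul_general, key, hFM, hFN]
  simp only [map_smul, LinearMap.smul_apply, smul_smul, ← Complex.ofReal_mul]
  rw [cp1, cm1, cp2, cm2, add_comm (-P1), add_comm (-0 : K0 R) (-P2)]
  congr 2
  simp only [← Real.rpow_add hv, sForm, cM, cN]
  congr 1
  push_cast
  simp only [map_sub, map_neg, map_zero, AddMonoidHom.sub_apply, AddMonoidHom.neg_apply,
    AddMonoidHom.zero_apply]
  push_cast
  ring

end
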